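/- arXiv:math/9801022 — 3 statements merged into one kernel-verified Lean document; each statement's English description precedes it below -/
import Mathlib

section
/- Let Ω ⊆ ℂ be open, U : Ω → ℝ, and let ψ = (ψ₁, ψ₂) satisfy the Dirac equation 𝒟ψ = 0 on Ω. Then the three 1-forms appearing in the Weierstrass representation formulas are closed; explicitly, on Ω: ∂̄(conj(ψ₂)² + ψ₁²) + ∂(conj(ψ₁)² + ψ₂²) = 0, ∂̄(conj(ψ₂)² − ψ₁²) + ∂(conj(ψ₁)² − ψ₂²) = 0, and ∂̄(ψ₁·conj(ψ₂)) = ∂(conj(ψ₁)·ψ₂). -/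
open Complex

/-- The Wirtinger derivative ∂f = (1/2)(∂f/∂x − i ∂f/∂y). -/
noncomputable def wd (f : ℂ → ℂ) (z : ℂ) : ℂ :=
  (1 / 2) * (fderiv ℝ f z 1 - Complex.I * fderiv ℝ f z Complex.I)

/-- The Wirtinger derivative ∂̄f = (1/2)(∂f/∂x + i ∂f/∂y). -/
noncomputable def wdbar (f : ℂ → ℂ) (z : ℂ) : ℂ :=
  (1 / 2) * (fderiv ℝ f z 1 + Complex.I * fderiv ℝ f z Complex.I)

/-- ψ = (ψ₁, ψ₂) satisfies the Dirac equation 𝒟ψ = 0 with potential U on Ω. -/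
def DiracEq (Ω : Set ℂ) (U : ℂ → ℝ) (ψ₁ ψ₂ : ℂ → ℂ) : Prop :=
  ∀ z ∈ Ω, wd ψ₂ z + (U z : ℂ) * ψ₁ z = 0 ∧ wdbar ψ₁ z = (U z : ℂ) * ψ₂ z

theorem fderiv_conj_apply {f : ℂ → ℂ} {z : ℂ} (hf : DifferentiableAt ℝ f z) (v : ℂ) :
    fderiv ℝ (fun w => starRingEnd ℂ (f w)) z v = starRingEnd ℂ (fderiv ℝ f z v) := by
  have h := (Complex.conjCLE.toContinuousLinearMap.hasFDerivAt (x := f z)).comp z hf.hasFDerivAt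
  have h' : HasFDerivAt (fun w => starRingEnd ℂ (f w))
      (Complex.conjCLE.toContinuousLinearMap.comp (fderiv ℝ f z)) z := h
  rw [h'.fderiv]
  simp

theorem diff_conj {f : ℂ → ℂ} {z : ℂ} (hf : DifferentiableAt ℝ f z) :
    DifferentiableAt ℝ (fun w => starRingEnd ℂ (f w)) z :=
  (Complex.conjCLE.toContinuousLinearMap.differentiableAt (x := f z)).comp z hf

theorem wdbar_conj {f : ℂ → ℂ} {z : ℂ} (hf : DifferentiableAt ℝ f z) :
    wdbar (fun w => starRingEnd ℂ (f w)) z = starRingEnd ℂ (wd f z) := by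
  simp [wdbar, wd, fderiv_conj_apply hf]
  exact Or.inl (map_ofNat (starRingEnd ℂ) 2).symm

theorem wd_conj {f : ℂ → ℂ} {z : ℂ} (hf : DifferentiableAt ℝ f z) :
    wd (fun w => starRingEnd ℂ (f w)) z = starRingEnd ℂ (wdbar f z) := by
  simp [wdbar, wd, fderiv_conj_apply hf, sub_eq_add_neg]
  exact Or.inl (map_ofNat (starRingEnd ℂ) 2).symm

theorem wd_add' {f g : ℂ → ℂ} {z : ℂ} (hf : DifferentiableAt ℝ f z)
    (hg : DifferentiableAt ℝ g z) :
    wd (fun w => f w + g w) z = wd f z + wd g z := by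
  simp only [wd, fderiv_fun_add hf hg, _root_.add_apply]
  ring

theorem wd_sub' {f g : ℂ → ℂ} {z : ℂ} (hf : DifferentiableAt ℝ f z)
    (hg : DifferentiableAt ℝ g z) :
    wd (fun w => f w - g w) z = wd f z - wd g z := by
  simp only [wd, fderiv_fun_sub hf hg, _root_.sub_apply]
  ring

theorem wd_mul' {f g : ℂ → ℂ} {z : ℂ} (hf : DifferentiableAt ℝ f z)
    (hg : DifferentiableAt ℝ g z) :
    wd (fun w => f w * g w) z = f z * wd g z + g z * wd f z := by
  simp only [wd, fderiv_fun_mul hf hg, _root_.add_apply,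
    _root_.smul_apply, smul_eq_mul]
  ring

theorem wdbar_add' {f g : ℂ → ℂ} {z : ℂ} (hf : DifferentiableAt ℝ f z)
    (hg : DifferentiableAt ℝ g z) :
    wdbar (fun w => f w + g w) z = wdbar f z + wdbar g z := by
  simp only [wdbar, fderiv_fun_add hf hg, _root_.add_apply]
  ring

theorem wdbar_sub' {f g : ℂ → ℂ} {z : ℂ} (hf : DifferentiableAt ℝ f z)
    (hg : DifferentiableAt ℝ g z) :
    wdbar (fun w => f w - g w) z = wdbar f z - wdbar g z := by
  simp only [wdbar, fderiv_fun_sub hf hg, _root_.sub_apply]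
  ring

theorem wdbar_mul' {f g : ℂ → ℂ} {z : ℂ} (hf : DifferentiableAt ℝ f z)
    (hg : DifferentiableAt ℝ g z) :
    wdbar (fun w => f w * g w) z = f z * wdbar g z + g z * wdbar f z := by
  simp only [wdbar, fderiv_fun_mul hf hg, _root_.add_apply,
    _root_.smul_apply, smul_eq_mul]
  ring

theorem stmt_4 (Ω : Set ℂ) (hΩ : IsOpen Ω) (U : ℂ → ℝ) (ψ₁ ψ₂ : ℂ → ℂ)
    (h₁ : DifferentiableOn ℝ ψ₁ Ω) (h₂ : DifferentiableOn ℝ ψ₂ Ω)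
    (hψ : DiracEq Ω U ψ₁ ψ₂) :
    ∀ z ∈ Ω,
      wdbar (fun w => (starRingEnd ℂ (ψ₂ w)) ^ 2 + ψ₁ w ^ 2) z +
        wd (fun w => (starRingEnd ℂ (ψ₁ w)) ^ 2 + ψ₂ w ^ 2) z = 0 ∧
      wdbar (fun w => (starRingEnd ℂ (ψ₂ w)) ^ 2 - ψ₁ w ^ 2) z +
        wd (fun w => (starRingEnd ℂ (ψ₁ w)) ^ 2 - ψ₂ w ^ 2) z = 0 ∧
      wdbar (fun w => ψ₁ w * starRingEnd ℂ (ψ₂ w)) z =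
        wd (fun w => starRingEnd ℂ (ψ₁ w) * ψ₂ w) z := by
  intro z hz
  have d1 := h₁.differentiableAt (hΩ.mem_nhds hz)
  have d2 := h₂.differentiableAt (hΩ.mem_nhds hz)
  have c1 := diff_conj d1
  have c2 := diff_conj d2
  obtain ⟨e2, e1⟩ := hψ z hz
  have e2 : wd ψ₂ z = -((U z : ℂ) * ψ₁ z) := eq_neg_of_add_eq_zero_left e2
  simp only [pow_two]
  rw [wdbar_add' (c2.fun_mul c2) (d1.fun_mul d1), wd_add' (c1.fun_mul c1) (d2.fun_mul d2),
    wdbar_sub' (c2.fun_mul c2) (d1.fun_mul d1), wd_sub' (c1.fun_mul c1) (d2.fun_mul d2),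
    wdbar_mul' c2 c2, wdbar_mul' d1 d1, wd_mul' c1 c1, wd_mul' d2 d2, wdbar_mul' d1 c2,
    wd_mul' c1 d2, wdbar_conj d2, wd_conj d1, e1, e2]
  simp only [map_neg, map_mul, Complex.conj_ofReal]
  refine ⟨?_, ?_, ?_⟩ <;> ring
end

section
/- Let U : ℂ \ {0} → ℝ and let ψ = (ψ₁, ψ₂) satisfy the Dirac equation 𝒟ψ = 0 on ℂ \ {0} with potential U. For u ∈ ℂ \ {0} put z = −1/u and define ψ̃₁(u) = z·ψ₁(z), ψ̃₂(u) = conj(z)·ψ₂(z), and Ũ(u) = |z|²·U(z). Then ψ̃ = (ψ̃₁, ψ̃₂) satisfies the Dirac equation in the variable u with potential Ũ: ∂_u ψ̃₂ + Ũ ψ̃₁ = 0 and ∂̄_u ψ̃₁ = Ũ ψ̃₂ on ℂ \ {0}. -/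
open Complex

lemma real_lin_apply (L : ℂ →L[ℝ] ℂ) (w : ℂ) :
    L w = (1 / 2) * (L 1 - Complex.I * L Complex.I) * w
      + (1 / 2) * (L 1 + Complex.I * L Complex.I) * starRingEnd ℂ w := by
  have h : w = w.re • (1 : ℂ) + w.im • Complex.I := by
    apply Complex.ext <;> simp
  have h1 : L w = w.re * L 1 + w.im * L Complex.I := by
    conv_lhs => rw [h]
    rw [map_add, map_smul, map_smul]
    simp
  rw [h1]
  have h2 : w = w.re + w.im * Complex.I := (Complex.re_add_im w).symm
  have h3 : starRingEnd ℂ w = w.re - w.im * Complex.I := by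
    apply Complex.ext <;> simp
  rw [h3]
  generalize hx : w.re = x at *
  generalize hy : w.im = y at *
  rw [h2]
  linear_combination (y * L Complex.I) * Complex.I_sq

lemma inv_hasFDeriv {u : ℂ} (hu : u ≠ 0) : ∃ M : ℂ →L[ℝ] ℂ,
    HasFDerivAt (fun u : ℂ => -u⁻¹) M u ∧ ∀ v, M v = (-u⁻¹) ^ 2 * v := by
  have h := ((hasDerivAt_inv hu).neg).hasFDerivAt.restrictScalars ℝ
  refine ⟨_, h, fun v => ?_⟩
  simp
  ring

theorem stmt_7 (U : ℂ → ℝ) (ψ₁ ψ₂ : ℂ → ℂ)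
    (h₁ : DifferentiableOn ℝ ψ₁ {z : ℂ | z ≠ 0})
    (h₂ : DifferentiableOn ℝ ψ₂ {z : ℂ | z ≠ 0})
    (hψ : DiracEq {z : ℂ | z ≠ 0} U ψ₁ ψ₂) :
    DiracEq {u : ℂ | u ≠ 0}
      (fun u => Complex.normSq (-u⁻¹) * U (-u⁻¹))
      (fun u => (-u⁻¹) * ψ₁ (-u⁻¹))
      (fun u => starRingEnd ℂ (-u⁻¹) * ψ₂ (-u⁻¹)) := by
  intro u hu
  have hu : u ≠ 0 := hu
  have hz : -u⁻¹ ≠ 0 := by simpa using hu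
  obtain ⟨M, hM, hMv⟩ := inv_hasFDeriv hu
  have hopen : IsOpen {z : ℂ | z ≠ 0} := isOpen_ne
  have d1 := (h₁.differentiableAt (hopen.mem_nhds hz)).hasFDerivAt
  have d2 := (h₂.differentiableAt (hopen.mem_nhds hz)).hasFDerivAt
  obtain ⟨e2, e1⟩ := hψ _ hz
  have c1 := HasFDerivAt.comp u d1 hM
  have c2 := HasFDerivAt.comp u d2 hM
  have m1 := (hM.mul c1).fderiv
  have hc := (Complex.conjCLE : ℂ →L[ℝ] ℂ).hasFDerivAt.comp u hM
  have m2 := (hc.mul c2).fderiv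
  have f1 : ∀ v, fderiv ℝ (fun u => (-u⁻¹) * ψ₁ (-u⁻¹)) u v
      = (-u⁻¹) * fderiv ℝ ψ₁ (-u⁻¹) ((-u⁻¹) ^ 2 * v) + ψ₁ (-u⁻¹) * ((-u⁻¹) ^ 2 * v) := by
    intro v
    rw [← hMv]
    exact (congrArg (fun L : ℂ →L[ℝ] ℂ => L v) m1).trans (by simp [mul_comm])
  have f2 : ∀ v, fderiv ℝ (fun u => starRingEnd ℂ (-u⁻¹) * ψ₂ (-u⁻¹)) u v
      = starRingEnd ℂ (-u⁻¹) * fderiv ℝ ψ₂ (-u⁻¹) ((-u⁻¹) ^ 2 * v)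
        + ψ₂ (-u⁻¹) * starRingEnd ℂ ((-u⁻¹) ^ 2 * v) := by
    intro v
    rw [← hMv]
    exact (congrArg (fun L : ℂ →L[ℝ] ℂ => L v) m2).trans (by simp [mul_comm])
  simp only [wd, wdbar] at e1 e2 ⊢
  rw [f1, f1, f2, f2]
  have g1 := real_lin_apply (fderiv ℝ ψ₁ (-u⁻¹))
  have g2 := real_lin_apply (fderiv ℝ ψ₂ (-u⁻¹))
  rw [e1] at g1
  rw [eq_neg_of_add_eq_zero_left e2] at g2
  rw [g1 (_ * 1), g1 (_ * I), g2 (_ * 1), g2 (_ * I)]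
  generalize -u⁻¹ = z at *
  generalize (1 / 2 : ℂ) * (fderiv ℝ ψ₁ z 1 - I * fderiv ℝ ψ₁ z I) = A
  generalize (1 / 2 : ℂ) * (fderiv ℝ ψ₂ z 1 + I * fderiv ℝ ψ₂ z I) = B
  simp only [map_mul, map_pow, map_one, Complex.conj_I, Complex.ofReal_mul,
    Complex.normSq_eq_conj_mul_self]
  generalize starRingEnd ℂ z = w
  have hI := Complex.I_sq
  constructor
  · grind
  · grind
end

section
/- Let U : ℝ → ℝ be continuous with ∫_ℝ |U(x)| dx < ∞, and let k ∈ ℂ with Im k ≤ 0. Then there exists a unique bounded continuous function f = (f₁, f₂) : ℝ → ℂ² satisfying the Volterra integral equation f₁(x) = ∫_{−∞}^{x} e^{−2ik(x−x′)}·2U(x′)·f₂(x′) dx′ and f₂(x) = 1 − ∫_{−∞}^{x} 2U(x′)·f₁(x′) dx′ for all x ∈ ℝ; the solution is given by a uniformly convergent Neumann series. -/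
open Complex MeasureTheory

/-- The (scalar) Volterra operator with kernel `e` and potential `2U`. -/
noncomputable def volt (U : ℝ → ℝ) (e : ℝ → ℝ → ℂ) (h : ℝ → ℂ) (x : ℝ) : ℂ :=
  ∫ y in Set.Iic x, e x y * (2 * (U y : ℂ)) * h y

lemma volt_norm_le (U : ℝ → ℝ) (e : ℝ → ℝ → ℂ)
    (he1 : ∀ x y, y ≤ x → ‖e x y‖ ≤ 1) (h : ℝ → ℂ) (b : ℝ → ℝ) (hb : ∀ y, ‖h y‖ ≤ b y)
    (x y : ℝ) (hxy : y ≤ x) :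
    ‖e x y * (2 * (U y : ℂ)) * h y‖ ≤ 2 * |U y| * b y := by
  rw [norm_mul, norm_mul, norm_mul, Complex.norm_real, Real.norm_eq_abs]
  have h1 := he1 x y hxy
  have h2 : ‖(2:ℂ)‖ = 2 := by simp
  rw [h2]
  have h3 : (0:ℝ) ≤ 2 * |U y| := by positivity
  calc ‖e x y‖ * (2 * |U y|) * ‖h y‖ ≤ 1 * (2 * |U y|) * b y := by
        gcongr
        exact hb y
    _ = _ := by ring

lemma volt_integrableOn (U : ℝ → ℝ) (hUc : Continuous U) (hUi : Integrable U)
    (e : ℝ → ℝ → ℂ) (he : Continuous (Function.uncurry e))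
    (he1 : ∀ x y, y ≤ x → ‖e x y‖ ≤ 1) (h : ℝ → ℂ) (hc : Continuous h) (C : ℝ)
    (hC : ∀ y, ‖h y‖ ≤ C) (x : ℝ) :
    IntegrableOn (fun y => e x y * (2 * (U y : ℂ)) * h y) (Set.Iic x) := by
  have hi : Integrable (fun y => 2 * |U y| * C) := (hUi.abs.const_mul 2).mul_const C
  refine Integrable.mono' hi.integrableOn ?_ ?_
  · have : Continuous (fun y => e x y) := he.comp (by fun_prop : Continuous fun y => (x, y))
    exact Continuous.aestronglyMeasurable (by fun_prop)
  · refine (ae_restrict_iff' measurableSet_Iic).2 (Filter.Eventually.of_forall fun y hy => ?_)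
    exact volt_norm_le U e he1 h (fun _ => C) hC x y hy

lemma volt_continuous (U : ℝ → ℝ) (hUc : Continuous U) (hUi : Integrable U)
    (e : ℝ → ℝ → ℂ) (he : Continuous (Function.uncurry e))
    (he1 : ∀ x y, y ≤ x → ‖e x y‖ ≤ 1) (h : ℝ → ℂ) (hc : Continuous h) (C : ℝ)
    (hC : ∀ y, ‖h y‖ ≤ C) : Continuous (volt U e h) := by
  have hi : Integrable (fun y => 2 * |U y| * C) := (hUi.abs.const_mul 2).mul_const C
  have hC0 : 0 ≤ C := (norm_nonneg _).trans (hC 0)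
  have hEq : volt U e h = fun x => ∫ y, (Set.Iic x).indicator
      (fun y => e x y * (2 * (U y : ℂ)) * h y) y := by
    funext x
    rw [integral_indicator measurableSet_Iic]
    rfl
  rw [hEq, continuous_iff_continuousAt]
  intro x0
  refine continuousAt_of_dominated (bound := fun y => 2 * |U y| * C) ?_ ?_ hi ?_
  · refine Filter.Eventually.of_forall fun x => ?_
    have : Continuous (fun y => e x y) := he.comp (by fun_prop : Continuous fun y => (x, y))
    exact (Continuous.aestronglyMeasurable (by fun_prop)).indicator measurableSet_Iic
  · refine Filter.Eventually.of_forall fun x => Filter.Eventually.of_forall fun y => ?_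
    by_cases hy : y ≤ x
    · rw [Set.indicator_of_mem (show y ∈ Set.Iic x from hy)]
      exact volt_norm_le U e he1 h (fun _ => C) hC x y hy
    · rw [Set.indicator_of_notMem (show y ∉ Set.Iic x from hy)]
      simp only [norm_zero]
      positivity
  · have hne : ∀ᵐ y : ℝ, y ≠ x0 := Measure.ae_ne volume x0
    filter_upwards [hne] with y hy
    have hex : Continuous (fun x => e x y) := he.comp (by fun_prop : Continuous fun x => (x, y))
    rcases lt_or_gt_of_ne hy with hlt | hgt
    · have : ContinuousAt (fun x => e x y * (2 * (U y : ℂ)) * h y) x0 :=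
        Continuous.continuousAt (by fun_prop)
      refine this.congr ?_
      filter_upwards [Ioi_mem_nhds hlt] with x hx
      rw [Set.indicator_of_mem (show y ∈ Set.Iic x from Set.mem_Iic.2 (le_of_lt hx))]
    · have : ContinuousAt (fun _ : ℝ => (0:ℂ)) x0 := continuousAt_const
      refine this.congr ?_
      filter_upwards [Iio_mem_nhds hgt] with x hx
      rw [Set.indicator_of_notMem (show y ∉ Set.Iic x from fun hh => absurd (Set.mem_Iic.1 hh) (not_le.2 hx))]

/-- Existence of a good weight. -/
lemma exists_weight (U : ℝ → ℝ) (hUc : Continuous U) (hUi : Integrable U) :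
    ∃ (w : ℝ → ℝ) (W : ℝ), Continuous w ∧ (∀ x, 1 ≤ w x) ∧ (∀ x, w x ≤ W) ∧
      ∀ x, ∫ y in Set.Iic x, 2 * |U y| * w y ≤ w x / 2 := by
  set a : ℝ → ℝ := fun y => 2 * |U y| with ha
  have hai : Integrable a := hUi.abs.const_mul 2
  have hac : Continuous a := by fun_prop
  have ha0 : ∀ y, 0 ≤ a y := fun y => by simp only [ha]; positivity
  set A : ℝ → ℝ := fun x => ∫ y in Set.Iic x, a y with hA
  have hA0 : ∀ x, 0 ≤ A x := fun x => integral_nonneg ha0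
  have hA1 : ∀ x, A x ≤ ∫ y, a y := fun x =>
    setIntegral_le_integral hai (Filter.Eventually.of_forall ha0)
  have hd : ∀ x, HasDerivAt A (a x) x := by
    intro x
    have h1 : HasDerivAt (fun u => A 0 + ∫ y in (0:ℝ)..u, a y) (a x) x :=
      (intervalIntegral.integral_hasDerivAt_right (hac.intervalIntegrable _ _)
        (hac.stronglyMeasurableAtFilter _ _) hac.continuousAt).const_add _
    refine h1.congr_of_eventuallyEq (Filter.Eventually.of_forall fun u => ?_)
    have := intervalIntegral.integral_Iic_sub_Iic (hai.integrableOn (s := Set.Iic 0))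
      (hai.integrableOn (s := Set.Iic u))
    simp only [hA]
    linarith
  have hAc : Continuous A := continuous_iff_continuousAt.2 fun x => (hd x).continuousAt
  have hlim : Filter.Tendsto A Filter.atBot (nhds 0) := tendsto_integral_Iic_zero Filter.tendsto_id
  refine ⟨fun x => Real.exp (2 * A x), Real.exp (2 * ∫ y, a y), by fun_prop, ?_, ?_, ?_⟩
  · intro x
    exact Real.one_le_exp (by have := hA0 x; positivity)
  · intro x
    exact Real.exp_le_exp.2 (by have := hA1 x; linarith)
  · intro x
    have hint : Integrable (fun y => a y * Real.exp (2 * A y)) := by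
      refine Integrable.mono' (hai.mul_const (Real.exp (2 * ∫ y, a y)))
        (Continuous.aestronglyMeasurable (by fun_prop)) (Filter.Eventually.of_forall fun y => ?_)
      rw [norm_mul, Real.norm_of_nonneg (ha0 y), Real.norm_of_nonneg (Real.exp_pos _).le]
      exact mul_le_mul_of_nonneg_left (Real.exp_le_exp.2 (by have := hA1 y; linarith)) (ha0 y)
    have h2 : ∀ y ∈ Set.Iic x, HasDerivAt (fun y => Real.exp (2 * A y) / 2)
        (a y * Real.exp (2 * A y)) y := by
      intro y _
      convert! (((hd y).const_mul 2).exp).div_const 2 using 1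
      ring
    have hl2 : Filter.Tendsto (fun y => Real.exp (2 * A y) / 2) Filter.atBot
        (nhds (Real.exp (2 * 0) / 2)) :=
      ((Real.continuous_exp.tendsto _).comp (hlim.const_mul 2)).div_const 2
    have h3 := integral_Iic_of_hasDerivAt_of_tendsto' h2 hint.integrableOn hl2
    rw [h3]
    exact sub_le_self _ (by positivity)

lemma volt_bound (U : ℝ → ℝ) (hUc : Continuous U) (hUi : Integrable U)
    (e : ℝ → ℝ → ℂ) (he1 : ∀ x y, y ≤ x → ‖e x y‖ ≤ 1)
    (w : ℝ → ℝ) (W : ℝ) (hw : Continuous w) (hw1 : ∀ x, 1 ≤ w x) (hW : ∀ x, w x ≤ W)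
    (hint : ∀ x, ∫ y in Set.Iic x, 2 * |U y| * w y ≤ w x / 2)
    (h : ℝ → ℂ) (D : ℝ) (hD0 : 0 ≤ D) (hD : ∀ y, ‖h y‖ ≤ D * w y) (x : ℝ) :
    ‖volt U e h x‖ ≤ D * (w x / 2) := by
  have hi : Integrable (fun y => 2 * |U y| * (D * w y)) := by
    refine Integrable.mono' ((hUi.abs.const_mul 2).mul_const (D * W))
      (Continuous.aestronglyMeasurable (by fun_prop)) (Filter.Eventually.of_forall fun y => ?_)
    have := hw1 y
    rw [Real.norm_of_nonneg (by positivity)]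
    have := hW y
    gcongr
  calc ‖volt U e h x‖ ≤ ∫ y in Set.Iic x, 2 * |U y| * (D * w y) := by
        refine norm_integral_le_of_norm_le hi.integrableOn ?_
        refine (ae_restrict_iff' measurableSet_Iic).2 (Filter.Eventually.of_forall fun y hy => ?_)
        exact volt_norm_le U e he1 h (fun y => D * w y) hD x y hy
    _ = D * ∫ y in Set.Iic x, 2 * |U y| * w y := by
        rw [← integral_const_mul]
        congr 1
        funext y
        ring
    _ ≤ _ := mul_le_mul_of_nonneg_left (hint x) hD0

lemma volt_sub (U : ℝ → ℝ) (hUc : Continuous U) (hUi : Integrable U)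
    (e : ℝ → ℝ → ℂ) (he : Continuous (Function.uncurry e))
    (he1 : ∀ x y, y ≤ x → ‖e x y‖ ≤ 1) (h h' : ℝ → ℂ) (hc : Continuous h) (hc' : Continuous h')
    (C : ℝ) (hC : ∀ y, ‖h y‖ ≤ C) (C' : ℝ) (hC' : ∀ y, ‖h' y‖ ≤ C') (x : ℝ) :
    volt U e h x - volt U e h' x = volt U e (fun y => h y - h' y) x := by
  unfold volt
  rw [← integral_sub (volt_integrableOn U hUc hUi e he he1 h hc C hC x)
    (volt_integrableOn U hUc hUi e he he1 h' hc' C' hC' x)]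
  congr 1
  funext y
  ring

/-- Abstract existence and uniqueness for the Volterra system. -/
lemma volt_system (U : ℝ → ℝ) (hUc : Continuous U) (hUi : Integrable U)
    (e : ℝ → ℝ → ℂ) (he : Continuous (Function.uncurry e))
    (he1 : ∀ x y, y ≤ x → ‖e x y‖ ≤ 1) :
    ∃! f : ℝ → ℂ × ℂ, (Continuous f ∧ Bornology.IsBounded (Set.range f)) ∧
      ∀ x, (f x).1 = volt U e (fun y => (f y).2) x ∧
        (f x).2 = 1 - volt U (fun _ _ => 1) (fun y => (f y).1) x := by
  obtain ⟨w, W, hw, hw1, hW, hint⟩ := exists_weight U hUc hUi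
  have hw0 : ∀ x, 0 < w x := fun x => lt_of_lt_of_le one_pos (hw1 x)
  have hW0 : 0 ≤ W := (hw0 0).le.trans (hW 0)
  have hwne : ∀ x, w x ≠ 0 := fun x => (hw0 x).ne'
  have ho : Continuous (Function.uncurry (fun _ _ : ℝ => (1:ℂ))) := continuous_const
  have ho1 : ∀ x y : ℝ, y ≤ x → ‖(fun _ _ : ℝ => (1:ℂ)) x y‖ ≤ 1 := by intros; simp
  -- bounds for weighted components
  have key : ∀ (u : ℝ → ℂ) (D : ℝ), (∀ y, ‖u y‖ ≤ D) → ∀ y, ‖(w y : ℂ) * u y‖ ≤ D * w y := by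
    intro u D hu y
    rw [norm_mul, Complex.norm_real, Real.norm_of_nonneg (hw0 y).le, mul_comm]
    exact mul_le_mul_of_nonneg_right (hu y) (hw0 y).le
  have key2 : ∀ (u : ℝ → ℂ) (D : ℝ), (∀ y, ‖u y‖ ≤ D) → ∀ y, ‖(w y : ℂ) * u y‖ ≤ D * W := by
    intro u D hu y
    refine (key u D hu y).trans (mul_le_mul_of_nonneg_left (hW y) ((norm_nonneg _).trans (hu 0)))
  -- the conjugated operator
  let S : (ℝ → ℂ × ℂ) → ℝ → ℂ × ℂ := fun g x =>
    (((w x)⁻¹ : ℝ) : ℂ) • (volt U e (fun y => (w y : ℂ) * (g y).2) x,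
      1 - volt U (fun _ _ => 1) (fun y => (w y : ℂ) * (g y).1) x)
  have hn1 : ∀ (g : BoundedContinuousFunction ℝ (ℂ × ℂ)) y, ‖(g y).1‖ ≤ ‖g‖ :=
    fun g y => (norm_fst_le _).trans (g.norm_coe_le_norm y)
  have hn2 : ∀ (g : BoundedContinuousFunction ℝ (ℂ × ℂ)) y, ‖(g y).2‖ ≤ ‖g‖ :=
    fun g y => (norm_snd_le _).trans (g.norm_coe_le_norm y)
  have hwc : Continuous fun y => (w y : ℂ) := Complex.continuous_ofReal.comp hw
  have hc1 : ∀ g : BoundedContinuousFunction ℝ (ℂ × ℂ), Continuous fun y => (w y : ℂ) * (g y).1 :=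
    fun g => hwc.mul (continuous_fst.comp g.continuous)
  have hc2 : ∀ g : BoundedContinuousFunction ℝ (ℂ × ℂ), Continuous fun y => (w y : ℂ) * (g y).2 :=
    fun g => hwc.mul (continuous_snd.comp g.continuous)
  have hSc : ∀ g : BoundedContinuousFunction ℝ (ℂ × ℂ), Continuous (S g) := by
    intro g
    refine Continuous.smul (Complex.continuous_ofReal.comp (hw.inv₀ hwne)) (Continuous.prodMk ?_ ?_)
    · exact volt_continuous U hUc hUi e he he1 _ (hc2 g) _ (key2 _ _ (hn2 g))
    · exact continuous_const.sub
        (volt_continuous U hUc hUi _ ho ho1 _ (hc1 g) _ (key2 _ _ (hn1 g)))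
  have hwi : ∀ x, ‖(((w x)⁻¹ : ℝ) : ℂ)‖ = (w x)⁻¹ := fun x => by
    rw [Complex.norm_real, Real.norm_of_nonneg (inv_nonneg.2 (hw0 x).le)]
  have hcancel : ∀ x D, (w x)⁻¹ * (D * (w x / 2)) = D / 2 := by
    intro x D
    have := hwne x
    field_simp
  have hSb : ∀ (g : BoundedContinuousFunction ℝ (ℂ × ℂ)) x, ‖S g x‖ ≤ 1 + ‖g‖ / 2 := by
    intro g x
    have b1 := volt_bound U hUc hUi e he1 w W hw hw1 hW hint _ ‖g‖ (norm_nonneg _)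
      (key _ _ (hn2 g)) x
    have b2 := volt_bound U hUc hUi _ ho1 w W hw hw1 hW hint _ ‖g‖ (norm_nonneg _)
      (key _ _ (hn1 g)) x
    have hwi1 : (w x)⁻¹ ≤ 1 := inv_le_one_of_one_le₀ (hw1 x)
    have hwi0 : 0 ≤ (w x)⁻¹ := inv_nonneg.2 (hw0 x).le
    have hg := norm_nonneg g
    simp only [S]
    rw [norm_smul, hwi]
    calc (w x)⁻¹ * _ ≤ (w x)⁻¹ * (1 + ‖g‖ * (w x / 2)) := by
          refine mul_le_mul_of_nonneg_left ?_ hwi0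
          refine norm_prod_le_iff.2 ⟨by linarith, ?_⟩
          refine (norm_sub_le _ _).trans ?_
          rw [norm_one]
          linarith
      _ = (w x)⁻¹ + ‖g‖ / 2 := by rw [mul_add, hcancel, mul_one]
      _ ≤ _ := by linarith
  let Φ : BoundedContinuousFunction ℝ (ℂ × ℂ) → BoundedContinuousFunction ℝ (ℂ × ℂ) := fun g =>
    BoundedContinuousFunction.ofNormedAddCommGroup (S g) (hSc g) _ (hSb g)
  have hΦ : ∀ g x, Φ g x = S g x := fun g x => rfl
  have hcontr : ContractingWith (1/2) Φ := by
    refine ⟨by rw [← NNReal.coe_lt_coe]; norm_num, LipschitzWith.of_dist_le_mul fun g h => ?_⟩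
    have hd0 : 0 ≤ dist g h := dist_nonneg
    have hco : (((1/2 : NNReal)) : ℝ) = 1/2 := by norm_num
    rw [hco, BoundedContinuousFunction.dist_le (by positivity)]
    intro x
    have hd1 : ∀ y, ‖(g y).1 - (h y).1‖ ≤ dist g h := fun y => by
      have := BoundedContinuousFunction.dist_coe_le_dist (f := g) (g := h) y
      rw [dist_eq_norm] at this
      exact (norm_fst_le (g y - h y)).trans this
    have hd2 : ∀ y, ‖(g y).2 - (h y).2‖ ≤ dist g h := fun y => by
      have := BoundedContinuousFunction.dist_coe_le_dist (f := g) (g := h) y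
      rw [dist_eq_norm] at this
      exact (norm_snd_le (g y - h y)).trans this
    have b1 := volt_bound U hUc hUi e he1 w W hw hw1 hW hint _ _ hd0 (key _ _ hd2) x
    have b2 := volt_bound U hUc hUi _ ho1 w W hw hw1 hW hint _ _ hd0 (key _ _ hd1) x
    simp only [mul_sub] at b1 b2
    rw [← volt_sub U hUc hUi e he he1 _ _ (hc2 g) (hc2 h) _ (key2 _ _ (hn2 g)) _
      (key2 _ _ (hn2 h))] at b1
    rw [← volt_sub U hUc hUi _ ho ho1 _ _ (hc1 g) (hc1 h) _ (key2 _ _ (hn1 g)) _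
      (key2 _ _ (hn1 h))] at b2
    rw [hΦ, hΦ, dist_eq_norm]
    simp only [S]
    rw [← smul_sub, norm_smul, hwi]
    calc (w x)⁻¹ * _ ≤ (w x)⁻¹ * (dist g h * (w x / 2)) := by
          refine mul_le_mul_of_nonneg_left ?_ (inv_nonneg.2 (hw0 x).le)
          refine norm_prod_le_iff.2 ⟨b1, ?_⟩
          simp only [Prod.mk_sub_mk, sub_sub_sub_cancel_left]
          rw [norm_sub_rev]
          exact b2
      _ = 1 / 2 * dist g h := by rw [hcancel]; ring
  have hww : ∀ x, (w x : ℂ) * (((w x)⁻¹ : ℝ) : ℂ) = 1 := fun x => by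
    rw [← Complex.ofReal_mul, mul_inv_cancel₀ (hwne x), Complex.ofReal_one]
  -- correspondence
  obtain ⟨g, hg⟩ : ∃ g, Φ g = g := ⟨_, hcontr.fixedPoint_isFixedPt⟩
  refine ⟨fun x => (w x : ℂ) • g x, ⟨⟨?_, ?_⟩, ?_⟩, ?_⟩
  · exact hwc.smul g.continuous
  · refine isBounded_iff_forall_norm_le.2 ⟨W * ‖g‖, ?_⟩
    rintro _ ⟨x, rfl⟩
    simp only
    rw [norm_smul, Complex.norm_real, Real.norm_of_nonneg (hw0 x).le]
    exact mul_le_mul (hW x) (g.norm_coe_le_norm x) (norm_nonneg _) hW0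
  · intro x
    have hx : g x = S g x := by rw [← hΦ, hg]
    have hx' : (w x : ℂ) • g x = (volt U e (fun y => (w y : ℂ) * (g y).2) x,
      1 - volt U (fun _ _ => 1) (fun y => (w y : ℂ) * (g y).1) x) := by
      rw [hx]
      simp only [S]
      rw [smul_smul, hww, one_smul]
    exact ⟨congrArg Prod.fst hx', congrArg Prod.snd hx'⟩
  · rintro f ⟨⟨hfc, hfb⟩, hf⟩
    obtain ⟨C, hC⟩ := isBounded_iff_forall_norm_le.1 hfb
    have hgb : ∀ x, ‖(((w x)⁻¹ : ℝ) : ℂ) • f x‖ ≤ C := by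
      intro x
      rw [norm_smul, hwi]
      have h1 := hC _ ⟨x, rfl⟩
      have h2 : (w x)⁻¹ ≤ 1 := inv_le_one_of_one_le₀ (hw1 x)
      exact (mul_le_of_le_one_left (norm_nonneg _) h2).trans h1
    let g' : BoundedContinuousFunction ℝ (ℂ × ℂ) :=
      BoundedContinuousFunction.ofNormedAddCommGroup (fun x => (((w x)⁻¹ : ℝ) : ℂ) • f x)
        (Continuous.smul (Complex.continuous_ofReal.comp (hw.inv₀ hwne)) hfc) C hgb
    have hg' : ∀ x, g' x = (((w x)⁻¹ : ℝ) : ℂ) • f x := fun x => rfl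
    have hwg : ∀ x, (w x : ℂ) • g' x = f x := fun x => by
      rw [hg', smul_smul, hww, one_smul]
    have hwg1 : (fun y => (w y : ℂ) * (g' y).1) = fun y => (f y).1 :=
      funext fun y => congrArg Prod.fst (hwg y)
    have hwg2 : (fun y => (w y : ℂ) * (g' y).2) = fun y => (f y).2 :=
      funext fun y => congrArg Prod.snd (hwg y)
    have hfix : Φ g' = g' := by
      ext1 x
      rw [hΦ, hg']
      simp only [S]
      rw [hwg1, hwg2, ← (hf x).1, ← (hf x).2]
    have : g' = g := hcontr.fixedPoint_unique' hfix hg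
    funext x
    rw [← hwg x, this]

theorem stmt_14 (U : ℝ → ℝ) (hUc : Continuous U) (hUi : Integrable U)
    (k : ℂ) (hk : k.im ≤ 0) :
    ∃! f : ℝ → ℂ × ℂ,
      (Continuous f ∧ Bornology.IsBounded (Set.range f)) ∧
      ∀ x : ℝ,
        (f x).1 = ∫ x' in Set.Iic x,
          Complex.exp (-2 * Complex.I * k * ((x : ℂ) - (x' : ℂ))) *
            (2 * (U x' : ℂ)) * (f x').2 ∧
        (f x).2 = 1 - ∫ x' in Set.Iic x, (2 * (U x' : ℂ)) * (f x').1 := by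
  have h := volt_system U hUc hUi
    (fun x y => Complex.exp (-2 * Complex.I * k * ((x : ℂ) - (y : ℂ))))
    (by unfold Function.uncurry; fun_prop)
    (by
      intro x y hxy
      rw [Complex.norm_exp, Real.exp_le_one_iff]
      have : (-2 * Complex.I * k * ((x : ℂ) - (y : ℂ))).re = 2 * k.im * (x - y) := by
        simp
      rw [this]
      have : 0 ≤ x - y := sub_nonneg.2 hxy
      nlinarith)
  simpa only [volt, one_mul] using h
end
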